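/- Let μ be a Borel probability measure on [0,1)^d assigning zero mass to the boundary of every dyadic cube, and let ℓ ∈ ℕ. Then for μ-almost every x, limsup_{r→0} log μ(B(x,r))/log r = limsup_{n→∞} (1/(ℓn))·Σ_{i=1}^{n} H(μ_ℓ^{Q_i(x)}), and liminf_{r→0} log μ(B(x,r))/log r = liminf_{n→∞} (1/(ℓn))·Σ_{i=1}^{n} H(μ_ℓ^{Q_i(x)}). -/

import Mathlib

open MeasureTheory Filter Metric Set

/-- The lower local dimension of a measure at a point:
`liminf_{r→0} log μ(B(x,r)) / log r`. -/
noncomputable def lowerLocalDim {X : Type*} [MetricSpace X] [MeasurableSpace X]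
    (μ : Measure X) (x : X) : EReal :=
  Filter.liminf (fun r : ℝ =>
    ((Real.log (μ (Metric.ball x r)).toReal / Real.log r : ℝ) : EReal))
    (nhdsWithin 0 (Set.Ioi 0))

/-- The upper local dimension of a measure at a point:
`limsup_{r→0} log μ(B(x,r)) / log r`. -/
noncomputable def upperLocalDim {X : Type*} [MetricSpace X] [MeasurableSpace X]
    (μ : Measure X) (x : X) : EReal :=
  Filter.limsup (fun r : ℝ =>
    ((Real.log (μ (Metric.ball x r)).toReal / Real.log r : ℝ) : EReal))
    (nhdsWithin 0 (Set.Ioi 0))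

/-- The half-open dyadic cell of level `n` with index `j`, i.e. `∏ᵢ [jᵢ/2ⁿ, (jᵢ+1)/2ⁿ)`. -/
def dyadicCell (d n : ℕ) (j : Fin d → ℤ) : Set (EuclideanSpace ℝ (Fin d)) :=
  {y | ∀ i, (j i : ℝ) / 2 ^ n ≤ y i ∧ y i < ((j i : ℝ) + 1) / 2 ^ n}

/-- The index of the level-`n` dyadic cube containing `x`. -/
noncomputable def dyadicIdx (d n : ℕ) (x : EuclideanSpace ℝ (Fin d)) : Fin d → ℤ :=
  fun i => ⌊(2 : ℝ) ^ n * x i⌋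

/-- `Q_n(x)`: the (unique) half-open dyadic cube of level `n` containing `x`. -/
noncomputable def Qcube (d n : ℕ) (x : EuclideanSpace ℝ (Fin d)) :
    Set (EuclideanSpace ℝ (Fin d)) :=
  dyadicCell d n (dyadicIdx d n x)

/-- `Q` is a dyadic cube (of some level) inside the unit cube `[0,1)^d`. -/
def IsDyadicCube (d : ℕ) (Q : Set (EuclideanSpace ℝ (Fin d))) : Prop :=
  ∃ (n : ℕ) (j : Fin d → ℤ), (∀ i, 0 ≤ j i ∧ j i < 2 ^ n) ∧ Q = dyadicCell d n j

/-- The half-open unit cube `[0,1)^d`. -/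
def unitCube (d : ℕ) : Set (EuclideanSpace ℝ (Fin d)) := dyadicCell d 0 0

/-- `H(μ_ℓ^{Q_n(x)})`: the base-2 entropy of the probability vector given by the relative
`μ`-measures of the `2^{ℓd}` level-`ℓ` dyadic subcubes of `Q_n(x)` (with the convention
`0·log 0 = 0`). -/
noncomputable def condEntropy' (d ℓ n : ℕ) (μ : Measure (EuclideanSpace ℝ (Fin d)))
    (x : EuclideanSpace ℝ (Fin d)) : ℝ :=
  ∑ k : Fin d → Fin (2 ^ ℓ),
    (fun p : ℝ => -(p * Real.logb 2 p))
      ((μ (dyadicCell d (n + ℓ)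
          (fun i => 2 ^ ℓ * dyadicIdx d n x i + ((k i : ℕ) : ℤ)))).toReal /
        (μ (Qcube d n x)).toReal)

/-!
Write `aₙ = -log₂ μ(Qₙ(x))`. The conditional information of the level-`(n + ℓ)` cube of `x` given
its level-`n` cube is `aₙ₊ℓ - aₙ`, with conditional mean `H(μ_ℓ^{Qₙ(x)})`. The deviations from this
mean are bounded in `L²`, bounded below, and orthogonal at index distance at least `ℓ`, so they obey
a strong law of large numbers: an `L²` estimate along the squares, filled in by monotonicity.
Telescoping turns it into `(1/(ℓn)) Σ H(μ_ℓ^{Qᵢ(x)}) = aₙ/n + o(1)`.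

Balls and cubes are compared up to polynomial factors. By Markov's inequality and Borel–Cantelli,
almost every `x` eventually satisfies `μ(B(x, 2⁻ⁿ)) ≤ (n+1)² μ(Qₙ(x))` and
`μ(Qₙ(x)) ≤ (n+1)² μ(Qₙ₊c(x))`, since summing the measures of the cubes near (respectively above)
a given cube over all cubes gives a constant multiple of the total mass. Hence
`-log₂ μ(B(x, r)) = aₙ + o(n)` for `2⁻⁽ⁿ⁺¹⁾ < r ≤ 2⁻ⁿ`.
-/

open Asymptotics ProbabilityTheory Topology
open scoped ENNReal

section Limits

variable {α : Type*} {l : Filter α}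

theorem limsup_coe_eq_of_tendsto_sub [l.NeBot] {u v : α → ℝ}
    (h : Tendsto (fun x => u x - v x) l (𝓝 0)) :
    limsup (fun x => (u x : EReal)) l = limsup (fun x => (v x : EReal)) l := by
  set w : α → EReal := fun x => ((u x - v x : ℝ) : EReal)
  have hw : Tendsto w l (𝓝 0) := (continuous_coe_real_ereal.tendsto 0).comp h
  have huv : (fun x => (u x : EReal)) = (fun x => (v x : EReal)) + w := by
    ext x
    simp only [w, Pi.add_apply, ← EReal.coe_add, add_sub_cancel]
  rw [huv]
  apply le_antisymm
  · refine (EReal.limsup_add_le ?_ ?_).trans ?_ <;> simp [hw.limsup_eq]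
  · simpa only [hw.liminf_eq, add_zero] using
      EReal.le_limsup_add (f := l) (u := fun x => (v x : EReal)) (v := w)

theorem liminf_coe_eq_of_tendsto_sub [l.NeBot] {u v : α → ℝ}
    (h : Tendsto (fun x => u x - v x) l (𝓝 0)) :
    liminf (fun x => (u x : EReal)) l = liminf (fun x => (v x : EReal)) l := by
  have hneg : ∀ w : α → ℝ, liminf (fun x => (w x : EReal)) l =
      -limsup (fun x => ((-w x : ℝ) : EReal)) l := fun w => by
    rw [← EReal.liminf_neg]
    congr with x
    simp
  rw [hneg, hneg,
    limsup_coe_eq_of_tendsto_sub (u := fun x => -u x) (v := fun x => -v x)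
      (by simpa [neg_add_eq_sub] using h.neg)]

theorem tendsto_div_sub_div_of_isLittleO {u v s t : α → ℝ} (huv : (fun x => u x - v x) =o[l] s)
    (hst : (fun x => t x - s x) =o[l] s) (hv : v =O[l] s) :
    Tendsto (fun x => u x / t x - v x / s x) l (𝓝 0) := by
  have hO : s =O[l] t := hst.right_isBigO_add.congr_right fun x => by ring
  have h₁ := (huv.trans_isBigO hO).tendsto_div_nhds_zero
  have h₂ := (hv.mul_isLittleO (hst.trans_isBigO hO)).tendsto_div_nhds_zero
  rw [← sub_zero (0 : ℝ)]
  refine (h₁.sub h₂).congr' ?_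
  filter_upwards [hO.eq_zero_imp, hst.isBigO.eq_zero_imp] with x hts hst
  by_cases hs : s x = 0
  · have ht : t x = 0 := by simpa [hs] using hst hs
    simp [hs, ht]
  · have ht : t x ≠ 0 := fun ht => hs (hts ht)
    field_simp
    ring

theorem isLittleO_logb_natCast_add_one (b : ℝ) :
    (fun n : ℕ => Real.logb b (n + 1)) =o[atTop] fun n : ℕ => (n : ℝ) := by
  have hlog : (fun n : ℕ => Real.log ((n : ℝ) + 1)) =o[atTop] fun n : ℕ => (n : ℝ) + 1 :=
    Real.isLittleO_log_id_atTop.comp_tendsto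
      (tendsto_atTop_add_const_right _ _ tendsto_natCast_atTop_atTop)
  have hone : (fun n : ℕ => (n : ℝ) + 1) =O[atTop] fun n : ℕ => (n : ℝ) :=
    (isBigO_refl _ _).add (isLittleO_const_left.2 (.inr
      (tendsto_norm_atTop_atTop.comp tendsto_natCast_atTop_atTop))).isBigO
  simpa only [Real.logb, div_eq_inv_mul] using
    (hlog.trans_isBigO hone).const_mul_left (Real.log b)⁻¹

theorem tendsto_sum_range_div_of_tendsto_sq {f : ℕ → ℝ} {C : ℝ} (hC : ∀ i, -C ≤ f i)
    (h : Tendsto (fun k : ℕ => (∑ i ∈ Finset.range (k ^ 2), f i) / (k : ℝ) ^ 2) atTop (𝓝 0)) :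
    Tendsto (fun n : ℕ => (∑ i ∈ Finset.range n, f i) / n) atTop (𝓝 0) := by
  set u : ℕ → ℝ := fun n => ∑ i ∈ Finset.range n, (f i + C) with hu
  have hu_eq : ∀ n : ℕ, 0 < n → u n / n = (∑ i ∈ Finset.range n, f i) / n + C := fun n hn => by
    have : (n : ℝ) ≠ 0 := by positivity
    simp only [hu, Finset.sum_add_distrib, Finset.sum_const, Finset.card_range, nsmul_eq_mul]
    field_simp
  have hmono : Monotone u := monotone_nat_of_le_succ fun n => by
    simp only [hu, Finset.sum_range_succ]
    linarith [hC n]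
  have hsq : Tendsto (fun k : ℕ => ((k + 1 : ℕ) : ℝ) ^ 2 / (k : ℝ) ^ 2) atTop (𝓝 1) := by
    have := ((tendsto_add_mul_div_add_mul_atTop_nhds (1 : ℝ) 0 1 one_ne_zero)).pow 2
    simpa [div_pow, add_comm] using this
  have hlim : Tendsto (fun n => u n / n) atTop (𝓝 C) := by
    refine tendsto_div_of_monotone_of_exists_subseq_tendsto_div u C hmono fun a ha =>
      ⟨fun k => k ^ 2, ?_, tendsto_pow_atTop two_ne_zero, ?_⟩
    · filter_upwards [hsq.eventually_lt_const ha, eventually_gt_atTop 0] with k hk hk0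
      rw [div_lt_iff₀ (by positivity)] at hk
      exact_mod_cast hk.le
    · rw [← zero_add C]
      refine (h.add_const C).congr' ?_
      filter_upwards [eventually_gt_atTop 0] with k hk
      rw [hu_eq _ (by positivity), Nat.cast_pow]
  rw [← sub_self C]
  refine (hlim.sub_const C).congr' ?_
  filter_upwards [eventually_gt_atTop 0] with n hn
  rw [hu_eq n hn, add_sub_cancel_right]

theorem sum_Icc_one_eq_sum_range (f : ℕ → ℝ) (n : ℕ) :
    ∑ i ∈ Finset.Icc 1 n, f i = ∑ i ∈ Finset.range n, f (i + 1) := by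
  rw [Finset.range_eq_Ico, Finset.sum_Ico_add', zero_add, Finset.Ico_add_one_right_eq_Icc]

theorem sum_range_add_sub_eq (b : ℕ → ℝ) (n ℓ : ℕ) :
    ∑ i ∈ Finset.range n, (b (i + ℓ) - b i) = ∑ j ∈ Finset.range ℓ, (b (n + j) - b j) := by
  have h₁ := Finset.sum_range_add b n ℓ
  have h₂ := Finset.sum_range_add b ℓ n
  simp only [Finset.sum_sub_distrib, add_comm _ ℓ] at *
  linarith

theorem tendsto_average_sub_div {a h : ℕ → ℝ} {ℓ : ℕ} (hℓ : 0 < ℓ)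
    (ha : ∀ k, (fun n => a (n + k) - a n) =o[atTop] fun n : ℕ => (n : ℝ))
    (hS : Tendsto (fun n : ℕ =>
      (∑ i ∈ Finset.Icc 1 n, (a (i + ℓ) - a i - h i)) / (n : ℝ)) atTop (𝓝 0)) :
    Tendsto (fun n : ℕ => 1 / ((ℓ : ℝ) * n) * ∑ i ∈ Finset.Icc 1 n, h i - a n / n)
      atTop (𝓝 0) := by
  have htele : ∀ n, ∑ i ∈ Finset.Icc 1 n, h i - ℓ * a n =
      ∑ j ∈ Finset.range ℓ, (a (n + (j + 1)) - a n) - ∑ j ∈ Finset.range ℓ, a (j + 1) -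
        ∑ i ∈ Finset.Icc 1 n, (a (i + ℓ) - a i - h i) := fun n => by
    have := sum_range_add_sub_eq (fun i => a (i + 1)) n ℓ
    simp only [sum_Icc_one_eq_sum_range, Finset.sum_sub_distrib, Finset.sum_const,
      Finset.card_range, nsmul_eq_mul, add_right_comm _ ℓ 1, add_assoc] at this ⊢
    linarith
  have hshift : Tendsto (fun n : ℕ => (∑ j ∈ Finset.range ℓ, (a (n + (j + 1)) - a n)) / (n : ℝ))
      atTop (𝓝 0) :=
    (IsLittleO.fun_sum fun j _ => ha (j + 1)).tendsto_div_nhds_zero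
  have hconst := tendsto_const_div_atTop_nhds_zero_nat (∑ j ∈ Finset.range ℓ, a (j + 1))
  have hlim := ((hshift.sub hconst).sub hS).const_mul (ℓ : ℝ)⁻¹
  simp only [sub_zero, mul_zero] at hlim
  refine hlim.congr' ?_
  filter_upwards [eventually_gt_atTop 0] with n hn
  have : (ℓ : ℝ) ≠ 0 := by positivity
  rw [← sub_div, ← sub_div, ← htele]
  field_simp

end Limits

section AlmostEverywhere

variable {Ω : Type*} [MeasurableSpace Ω] {μ : Measure Ω}

theorem ae_tendsto_zero_of_summable_integral {f : ℕ → Ω → ℝ} (hf₀ : ∀ n, 0 ≤ f n)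
    (hf : ∀ n, Integrable (f n) μ) (hsum : Summable fun n => ∫ x, f n x ∂μ) :
    ∀ᵐ x ∂μ, Tendsto (fun n => f n x) atTop (𝓝 0) := by
  have hmeas : ∀ n, AEMeasurable (fun x => ENNReal.ofReal (f n x)) μ := fun n =>
    (hf n).aestronglyMeasurable.aemeasurable.ennreal_ofReal
  have hfin : ∫⁻ x, ∑' n, ENNReal.ofReal (f n x) ∂μ ≠ ∞ := by
    simp only [lintegral_tsum hmeas,
      ← ofReal_integral_eq_lintegral_ofReal (hf _) (.of_forall (hf₀ _))]
    exact hsum.tsum_ofReal_ne_top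
  filter_upwards [ae_lt_top' (AEMeasurable.tsum hmeas) hfin] with x hx
  have hlim := (ENNReal.tendsto_toReal ENNReal.zero_ne_top).comp
    (ENNReal.tendsto_atTop_zero_of_tsum_ne_top hx.ne)
  exact hlim.congr fun n => ENNReal.toReal_ofReal (hf₀ n x)

theorem integral_mul_le_of_integral_sq_le {f g : Ω → ℝ} {M : ℝ} (hf : MemLp f 2 μ)
    (hg : MemLp g 2 μ) (hfM : ∫ x, f x ^ 2 ∂μ ≤ M) (hgM : ∫ x, g x ^ 2 ∂μ ≤ M) :
    ∫ x, f x * g x ∂μ ≤ M := by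
  have hle : ∫ x, f x * g x ∂μ ≤ ∫ x, (f x ^ 2 / 2 + g x ^ 2 / 2) ∂μ :=
    integral_mono (hf.integrable_mul hg)
      ((hf.integrable_sq.div_const 2).add (hg.integrable_sq.div_const 2)) fun x => by
        simp only
        linarith [two_mul_le_add_sq (f x) (g x)]
  rw [integral_add (hf.integrable_sq.div_const 2) (hg.integrable_sq.div_const 2),
    integral_div, integral_div] at hle
  linarith

/-- A sequence of functions bounded by `√M` in `L²(μ)` and orthogonal at index distance at least
`ℓ`; the hypothesis of the strong law of large numbers for the deviations from the conditional
entropies, which are correlated at smaller distances. -/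
structure IsLagOrthogonal (μ : Measure Ω) (f : ℕ → Ω → ℝ) (ℓ : ℕ) (M : ℝ) : Prop where
  memLp : ∀ i, MemLp (f i) 2 μ
  integral_sq_le : ∀ i, ∫ x, f i x ^ 2 ∂μ ≤ M
  integral_mul_eq_zero : ∀ i j, i + ℓ ≤ j → ∫ x, f i x * f j x ∂μ = 0

namespace IsLagOrthogonal

variable {f : ℕ → Ω → ℝ} {M : ℝ} {ℓ : ℕ}

theorem sum_integral_mul_le (hf : IsLagOrthogonal μ f ℓ M) (i n : ℕ) :
    ∑ j ∈ Finset.range n, ∫ x, f i x * f j x ∂μ ≤ 2 * ℓ * M := by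
  have hM₀ : 0 ≤ M := (integral_nonneg fun x => sq_nonneg (f i x)).trans (hf.integral_sq_le i)
  have hterm : ∀ j, ∫ x, f i x * f j x ∂μ ≤
      if j ∈ Finset.Ico (i + 1 - ℓ) (i + ℓ) then M else 0 := fun j => by
    split_ifs with hj
    · exact integral_mul_le_of_integral_sq_le (hf.memLp i) (hf.memLp j)
        (hf.integral_sq_le i) (hf.integral_sq_le j)
    · rw [Finset.mem_Ico] at hj
      obtain hij | hji : i + ℓ ≤ j ∨ j + ℓ ≤ i := by omega
      · exact (hf.integral_mul_eq_zero i j hij).le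
      · simpa only [mul_comm] using (hf.integral_mul_eq_zero j i hji).le
  have hcard : (Finset.range n ∩ Finset.Ico (i + 1 - ℓ) (i + ℓ)).card ≤ 2 * ℓ := by
    refine (Finset.card_le_card Finset.inter_subset_right).trans ?_
    rw [Nat.card_Ico]
    omega
  calc ∑ j ∈ Finset.range n, ∫ x, f i x * f j x ∂μ
      ≤ (Finset.range n ∩ Finset.Ico (i + 1 - ℓ) (i + ℓ)).card * M :=
        (Finset.sum_le_sum fun j _ => hterm j).trans_eq (by
          rw [Finset.sum_ite_mem, Finset.sum_const, nsmul_eq_mul])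
    _ ≤ 2 * ℓ * M := by
        gcongr
        exact_mod_cast hcard

theorem integral_sum_sq_le (hf : IsLagOrthogonal μ f ℓ M) (n : ℕ) :
    ∫ x, (∑ i ∈ Finset.range n, f i x) ^ 2 ∂μ ≤ n * (2 * ℓ * M) := by
  have hint : ∀ i j, Integrable (fun x => f i x * f j x) μ := fun i j =>
    (hf.memLp i).integrable_mul (hf.memLp j)
  simp only [sq, Finset.sum_mul_sum]
  rw [integral_finsetSum _ fun i _ => integrable_finsetSum _ fun j _ => hint i j]
  calc ∑ i ∈ Finset.range n, ∫ x, ∑ j ∈ Finset.range n, f i x * f j x ∂μ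
      ≤ ∑ _i ∈ Finset.range n, 2 * ℓ * M := Finset.sum_le_sum fun i _ => by
        rw [integral_finsetSum _ fun j _ => hint i j]
        exact hf.sum_integral_mul_le i n
    _ = n * (2 * ℓ * M) := by rw [Finset.sum_const, Finset.card_range, nsmul_eq_mul]

theorem ae_tendsto_sum_sq_div (hf : IsLagOrthogonal μ f ℓ M) :
    ∀ᵐ x ∂μ, Tendsto (fun k : ℕ => (∑ i ∈ Finset.range (k ^ 2), f i x) / (k : ℝ) ^ 2)
      atTop (𝓝 0) := by
  set g : ℕ → Ω → ℝ := fun k x => ((∑ i ∈ Finset.range (k ^ 2), f i x) / (k : ℝ) ^ 2) ^ 2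
  have hint : ∀ k, Integrable (g k) μ := fun k =>
    ((memLp_finsetSum _ fun i _ => hf.memLp i).mul_const _).integrable_sq
  have hbound : ∀ k, ∫ x, g k x ∂μ ≤ 2 * ℓ * M * (1 / (k : ℝ) ^ 2) := fun k => by
    simp only [g, div_pow, integral_div]
    obtain rfl | hk := k.eq_zero_or_pos
    · simp
    · have h := hf.integral_sum_sq_le (k ^ 2)
      rw [div_le_iff₀ (by positivity)]
      refine h.trans_eq ?_
      push_cast
      field_simp
  have hsum : Summable fun k => ∫ x, g k x ∂μ :=
    .of_nonneg_of_le (fun k => integral_nonneg fun x => sq_nonneg _) hbound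
      ((Real.summable_one_div_nat_pow.2 one_lt_two).mul_left _)
  filter_upwards [ae_tendsto_zero_of_summable_integral (fun k x => sq_nonneg _) hint hsum]
    with x hx
  simpa [g, Real.sqrt_sq_eq_abs, tendsto_zero_iff_abs_tendsto_zero, Function.comp_def] using hx.sqrt

theorem ae_tendsto_sum_div (hf : IsLagOrthogonal μ f ℓ M) {C : ℝ} (hC : ∀ i x, -C ≤ f i x) :
    ∀ᵐ x ∂μ, Tendsto (fun n : ℕ => (∑ i ∈ Finset.range n, f i x) / n) atTop (𝓝 0) := by
  filter_upwards [hf.ae_tendsto_sum_sq_div] with x hx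
  exact tendsto_sum_range_div_of_tendsto_sq (fun i => hC i x) hx

end IsLagOrthogonal

theorem tsum_inv_natCast_add_one_sq_ne_top : ∑' n : ℕ, (((n : ℝ≥0∞) + 1) ^ 2)⁻¹ ≠ ∞ := by
  have h := ((summable_nat_add_iff 1).2
    (Real.summable_nat_pow_inv.2 one_lt_two)).tsum_ofReal_ne_top
  convert h using 4 with n
  rw [ENNReal.ofReal_inv_of_pos (by positivity), ENNReal.ofReal_pow (by positivity),
    ENNReal.ofReal_natCast, Nat.cast_add_one]

theorem ae_eventually_le_mul_measure_preimage {ι : Type*} [Countable ι] [MeasurableSpace ι]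
    [MeasurableSingletonClass ι] {π : ℕ → Ω → ι} (hπ : ∀ n, Measurable (π n))
    {w : ℕ → ι → ℝ≥0∞} {K : ℝ≥0∞} (hK : K ≠ ∞) (hw : ∀ n, ∑' i, w n i ≤ K) :
    ∀ᵐ x ∂μ, ∀ᶠ n : ℕ in atTop, w n (π n x) ≤ ((n : ℝ≥0∞) + 1) ^ 2 * μ (π n ⁻¹' {π n x}) := by
  set bad : ℕ → Set ι := fun n => {i | ((n : ℝ≥0∞) + 1) ^ 2 * μ (π n ⁻¹' {i}) < w n i}
  have hbad : ∀ n, μ (π n ⁻¹' bad n) ≤ (((n : ℝ≥0∞) + 1) ^ 2)⁻¹ * K := fun n => by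
    have hc₀ : ((n : ℝ≥0∞) + 1) ^ 2 ≠ 0 := by simp
    have hc : ((n : ℝ≥0∞) + 1) ^ 2 ≠ ∞ := by finiteness
    calc μ (π n ⁻¹' bad n) = ∑' i : bad n, μ (π n ⁻¹' {(i : ι)}) :=
          (tsum_measure_preimage_singleton (Set.to_countable _) fun i _ =>
            hπ n (measurableSet_singleton i)).symm
      _ ≤ ∑' i : bad n, (((n : ℝ≥0∞) + 1) ^ 2)⁻¹ * w n i := ENNReal.tsum_le_tsum fun i =>
          (ENNReal.mul_le_iff_le_inv hc₀ hc).1 i.2.le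
      _ ≤ (((n : ℝ≥0∞) + 1) ^ 2)⁻¹ * K := by
          rw [ENNReal.tsum_mul_left]
          gcongr
          exact (ENNReal.tsum_comp_le_tsum_of_injective Subtype.val_injective _).trans (hw n)
  have hsum : ∑' n, μ (π n ⁻¹' bad n) ≠ ∞ := by
    refine ne_top_of_le_ne_top ?_ (ENNReal.tsum_le_tsum hbad)
    rw [ENNReal.tsum_mul_right]
    exact ENNReal.mul_ne_top tsum_inv_natCast_add_one_sq_ne_top hK
  filter_upwards [ae_eventually_notMem hsum] with x hx
  filter_upwards [hx] with n hn
  exact not_lt.1 hn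

end AlmostEverywhere

section Information

theorem mul_neg_logb_le {b p : ℝ} (hb : 1 ≤ b) (hp₀ : 0 ≤ p) (hp₁ : p ≤ 1) :
    p * -Real.logb b p ≤ 1 / Real.log b := by
  have hlog := Real.log_nonneg hb
  obtain rfl | hp := hp₀.eq_or_lt
  · simpa using hlog
  · have h := (abs_lt.1 (Real.abs_log_mul_self_lt p hp hp₁)).1
    rw [Real.logb, ← neg_div, ← mul_div_assoc]
    gcongr
    linarith

theorem mul_logb_sq_le {p : ℝ} (b : ℝ) (hp₀ : 0 ≤ p) (hp₁ : p ≤ 1) :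
    p * Real.logb b p ^ 2 ≤ 4 / Real.log b ^ 2 := by
  obtain rfl | hp := hp₀.eq_or_lt
  · simp only [zero_mul]
    positivity
  · have h := (Real.abs_log_mul_self_rpow_lt p (1 / 2) hp hp₁ one_half_pos).le
    rw [← Real.sqrt_eq_rpow, one_div_one_div] at h
    have hsq : p * Real.log p ^ 2 = |Real.log p * √p| ^ 2 := by
      rw [sq_abs, mul_pow, Real.sq_sqrt hp₀, mul_comm]
    rw [Real.logb, div_pow, ← mul_div_assoc, hsq]
    gcongr
    nlinarith [abs_nonneg (Real.log p * √p)]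

variable {Ω κ : Type*} [MeasurableSpace Ω]

/-- The information `-log₂ ν(Y = Y x)` revealed by observing the value of `Y` at `x`. -/
noncomputable def information (ν : Measure Ω) (Y : Ω → κ) (x : Ω) : ℝ :=
  -Real.logb 2 (ν.real (Y ⁻¹' {Y x}))

variable {ν : Measure Ω} {Y : Ω → κ}

theorem information_comp_of_injective {κ' : Type*} {e : κ → κ'} (he : e.Injective) :
    information ν (e ∘ Y) = information ν Y := by
  ext x
  have hfib : e ∘ Y ⁻¹' {(e ∘ Y) x} = Y ⁻¹' {Y x} := by
    ext y
    exact he.eq_iff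
  rw [information, hfib, information]

theorem ae_measure_preimage_singleton_ne_zero [Countable κ] (ν : Measure Ω) (Y : Ω → κ) :
    ∀ᵐ x ∂ν, ν (Y ⁻¹' {Y x}) ≠ 0 := by
  have hnull : ∀ᵐ x ∂ν, ∀ k, ν (Y ⁻¹' {k}) = 0 → Y x ≠ k :=
    ae_all_iff.2 fun k => eventually_imp_distrib_left.2 fun hk => measure_eq_zero_iff_ae_notMem.1 hk
  filter_upwards [hnull] with x hx h0
  exact hx _ h0 rfl

/-- The base-2 Shannon entropy of the distribution of a finite-valued function `Y` under `ν`. -/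
noncomputable def shannonEntropy [Fintype κ] (ν : Measure Ω) (Y : Ω → κ) : ℝ :=
  ∑ k, -(ν.real (Y ⁻¹' {k}) * Real.logb 2 (ν.real (Y ⁻¹' {k})))

variable [IsZeroOrProbabilityMeasure ν]

theorem information_nonneg (x : Ω) : 0 ≤ information ν Y x :=
  neg_nonneg.2 (Real.logb_nonpos one_lt_two measureReal_nonneg measureReal_le_one)

theorem memLp_information [Finite κ] [MeasurableSpace κ] [MeasurableSingletonClass κ]
    (hY : Measurable Y) : MemLp (information ν Y) 2 ν :=
  MemLp.of_discrete.comp_measurePreserving (hY.measurePreserving ν)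
    (g := fun k => -Real.logb 2 (ν.real (Y ⁻¹' {k})))

variable [Fintype κ]

variable (ν Y) in
theorem shannonEntropy_nonneg : 0 ≤ shannonEntropy ν Y :=
  Finset.sum_nonneg fun _ _ => neg_nonneg.2 (mul_nonpos_of_nonneg_of_nonpos measureReal_nonneg
    (Real.logb_nonpos one_lt_two measureReal_nonneg measureReal_le_one))

variable (ν Y) in
theorem shannonEntropy_le : shannonEntropy ν Y ≤ Fintype.card κ * (1 / Real.log 2) := by
  rw [← nsmul_eq_mul, ← Finset.card_univ, ← Finset.sum_const]
  exact Finset.sum_le_sum fun k _ => (neg_mul_eq_mul_neg _ _).trans_le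
    (mul_neg_logb_le one_le_two measureReal_nonneg measureReal_le_one)

variable [MeasurableSpace κ] [MeasurableSingletonClass κ]

theorem integral_comp_eq_sum (hY : Measurable Y) (F : κ → ℝ) :
    ∫ x, F (Y x) ∂ν = ∑ k, ν.real (Y ⁻¹' {k}) * F k := by
  rw [← integral_map hY.aemeasurable (measurable_of_finite F).aestronglyMeasurable,
    integral_fintype .of_finite]
  simp only [map_measureReal_apply hY (measurableSet_singleton _), smul_eq_mul]

theorem integral_information (hY : Measurable Y) :
    ∫ x, information ν Y x ∂ν = shannonEntropy ν Y := by
  simp only [information, shannonEntropy, neg_mul_eq_mul_neg,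
    integral_comp_eq_sum hY fun k => -Real.logb 2 (ν.real (Y ⁻¹' {k}))]

theorem integral_information_sub_shannonEntropy (hY : Measurable Y) :
    ∫ x, (information ν Y x - shannonEntropy ν Y) ∂ν = 0 := by
  rcases eq_zero_or_isProbabilityMeasure ν with rfl | _
  · simp
  · rw [integral_sub ((memLp_information hY).integrable one_le_two) (integrable_const _),
      integral_information hY]
    simp

theorem integral_information_sub_shannonEntropy_sq_le (hY : Measurable Y) :
    ∫ x, (information ν Y x - shannonEntropy ν Y) ^ 2 ∂ν ≤
      Fintype.card κ * (4 / Real.log 2 ^ 2) := by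
  rcases eq_zero_or_isProbabilityMeasure ν with rfl | _
  · simp only [integral_zero_measure]
    positivity
  have hmeas := (memLp_information (ν := ν) hY).aestronglyMeasurable
  calc ∫ x, (information ν Y x - shannonEntropy ν Y) ^ 2 ∂ν
      = Var[information ν Y; ν] := by
        rw [variance_eq_integral hmeas.aemeasurable, integral_information hY]
    _ ≤ ∫ x, information ν Y x ^ 2 ∂ν := variance_le_expectation_sq hmeas
    _ = ∑ k, ν.real (Y ⁻¹' {k}) * Real.logb 2 (ν.real (Y ⁻¹' {k})) ^ 2 := by
        simp only [information, neg_sq,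
          integral_comp_eq_sum hY fun k => Real.logb 2 (ν.real (Y ⁻¹' {k})) ^ 2]
    _ ≤ Fintype.card κ * (4 / Real.log 2 ^ 2) := by
        rw [← nsmul_eq_mul, ← Finset.card_univ, ← Finset.sum_const]
        exact Finset.sum_le_sum fun k _ => mul_logb_sq_le 2 measureReal_nonneg measureReal_le_one

end Information

section Conditioning

variable {Ω ι κ : Type*} [MeasurableSpace Ω] {μ : Measure Ω} {X : Ω → ι}

/-- How much the conditional information of `Y` given `X` at `x` exceeds the conditional entropy
of `Y` on the fibre of `X` through `x`. -/
noncomputable def infoDeviation [Fintype κ] (μ : Measure Ω) (X : Ω → ι) (Y : Ω → κ) (x : Ω) : ℝ :=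
  information μ[|X ⁻¹' {X x}] Y x - shannonEntropy μ[|X ⁻¹' {X x}] Y

theorem neg_card_le_infoDeviation [Fintype κ] {Y : Ω → κ} (x : Ω) :
    -(Fintype.card κ * (1 / Real.log 2)) ≤ infoDeviation μ X Y x := by
  have h₁ := information_nonneg (ν := μ[|X ⁻¹' {X x}]) (Y := Y) x
  have h₂ := shannonEntropy_le μ[|X ⁻¹' {X x}] Y
  rw [infoDeviation]
  linarith

variable [MeasurableSpace ι] [MeasurableSingletonClass ι]

section Disintegration

variable [Countable ι] [IsFiniteMeasure μ]

theorem sum_smul_cond_preimage_singleton (hX : Measurable X) :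
    Measure.sum (fun q => μ (X ⁻¹' {q}) • μ[|X ⁻¹' {q}]) = μ := by
  have hfib : ∀ q, MeasurableSet (X ⁻¹' {q}) := fun q => hX (measurableSet_singleton q)
  have hsmul : ∀ q, μ (X ⁻¹' {q}) • μ[|X ⁻¹' {q}] = μ.restrict (X ⁻¹' {q}) := fun q => by
    ext t ht
    rw [Measure.smul_apply, smul_eq_mul, mul_comm, cond_mul_eq_inter (hfib q),
      Measure.restrict_apply ht, Set.inter_comm]
  simp only [hsmul]
  rw [← Measure.restrict_iUnion (pairwise_disjoint_fiber X) hfib, ← Set.preimage_iUnion,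
    Set.iUnion_of_singleton, Set.preimage_univ, Measure.restrict_univ]

theorem integral_eq_zero_of_forall_cond (hX : Measurable X) {f : Ω → ℝ} (hf : Integrable f μ)
    (h : ∀ q, ∫ x, f x ∂μ[|X ⁻¹' {q}] = 0) : ∫ x, f x ∂μ = 0 := by
  rw [← sum_smul_cond_preimage_singleton hX (μ := μ)] at hf
  have hsum := hasSum_integral_measure hf
  simp only [integral_smul_measure, h, smul_zero, sum_smul_cond_preimage_singleton hX] at hsum
  exact hsum.unique hasSum_zero

theorem lintegral_le_of_forall_cond (hX : Measurable X) {f : Ω → ℝ≥0∞} {M : ℝ≥0∞}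
    (h : ∀ q, ∫⁻ x, f x ∂μ[|X ⁻¹' {q}] ≤ M) : ∫⁻ x, f x ∂μ ≤ μ univ * M := by
  calc ∫⁻ x, f x ∂μ = ∑' q, μ (X ⁻¹' {q}) * ∫⁻ x, f x ∂μ[|X ⁻¹' {q}] := by
        conv_lhs => rw [← sum_smul_cond_preimage_singleton hX (μ := μ)]
        simp only [lintegral_sum_measure, lintegral_smul_measure, smul_eq_mul]
    _ ≤ ∑' q, μ (X ⁻¹' {q}) * M := ENNReal.tsum_le_tsum fun q => by gcongr; exact h q
    _ = μ univ * M := by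
        rw [ENNReal.tsum_mul_right, ← tsum_univ fun q => μ (X ⁻¹' {q}),
          tsum_measure_preimage_singleton Set.countable_univ fun q _ =>
            hX (measurableSet_singleton q), Set.preimage_univ]

end Disintegration

theorem measureReal_cond {s : Set Ω} (hs : MeasurableSet s) (t : Set Ω) :
    μ[|s].real t = (μ.real s)⁻¹ * μ.real (s ∩ t) := by
  rw [Measure.real, cond_apply hs, ENNReal.toReal_mul, ENNReal.toReal_inv]
  rfl

theorem information_cond [IsFiniteMeasure μ] (hX : Measurable X) (Y : Ω → κ) {x : Ω}
    (hx : μ ((fun y => (X y, Y y)) ⁻¹' {(X x, Y x)}) ≠ 0) :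
    information μ[|X ⁻¹' {X x}] Y x =
      information μ (fun y => (X y, Y y)) x - information μ X x := by
  have hpair : (fun y => (X y, Y y)) ⁻¹' {(X x, Y x)} = X ⁻¹' {X x} ∩ Y ⁻¹' {Y x} := by
    rw [← Set.singleton_prod_singleton, Set.mk_preimage_prod]
  rw [hpair] at hx
  have hXY : μ.real (X ⁻¹' {X x} ∩ Y ⁻¹' {Y x}) ≠ 0 := (measureReal_ne_zero_iff).2 hx
  have hXx : μ.real (X ⁻¹' {X x}) ≠ 0 :=
    (measureReal_ne_zero_iff).2 fun h => hx (measure_mono_null Set.inter_subset_left h)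
  rw [information, information, information, hpair,
    measureReal_cond (hX (measurableSet_singleton _)), Real.logb_mul (inv_ne_zero hXx) hXY,
    Real.logb_inv]
  ring

variable [Fintype κ] {Y : Ω → κ}

theorem infoDeviation_ae_eq_cond (hX : Measurable X) (q : ι) :
    infoDeviation μ X Y =ᵐ[μ[|X ⁻¹' {q}]]
      fun x => information μ[|X ⁻¹' {q}] Y x - shannonEntropy μ[|X ⁻¹' {q}] Y :=
  ae_cond_of_forall_mem (hX (measurableSet_singleton q)) fun x hx => by
    rw [infoDeviation, show X x = q from hx]

variable [Countable ι] [IsFiniteMeasure μ] [MeasurableSpace κ] [MeasurableSingletonClass κ]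

theorem lintegral_infoDeviation_sq_le (hX : Measurable X) (hY : Measurable Y) :
    ∫⁻ x, ENNReal.ofReal (infoDeviation μ X Y x ^ 2) ∂μ ≤
      μ univ * ENNReal.ofReal (Fintype.card κ * (4 / Real.log 2 ^ 2)) := by
  refine lintegral_le_of_forall_cond hX fun q => ?_
  have hL2 : MemLp (fun x => information μ[|X ⁻¹' {q}] Y x - shannonEntropy μ[|X ⁻¹' {q}] Y) 2
      μ[|X ⁻¹' {q}] := (memLp_information hY).sub (memLp_const _)
  have hae := (infoDeviation_ae_eq_cond hX q (μ := μ) (Y := Y)).fun_comp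
    fun t => ENNReal.ofReal (t ^ 2)
  rw [Function.comp_def, Function.comp_def] at hae
  rw [lintegral_congr_ae hae, ← ofReal_integral_eq_lintegral_ofReal hL2.integrable_sq
    (.of_forall fun x => sq_nonneg _)]
  exact ENNReal.ofReal_le_ofReal (integral_information_sub_shannonEntropy_sq_le hY)

theorem memLp_infoDeviation (hX : Measurable X) (hY : Measurable Y) :
    MemLp (infoDeviation μ X Y) 2 μ := by
  set G : ι × κ → ℝ := fun z =>
    -Real.logb 2 (μ[|X ⁻¹' {z.1}].real (Y ⁻¹' {z.2})) - shannonEntropy μ[|X ⁻¹' {z.1}] Y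
  have hG : infoDeviation μ X Y = fun x => G (X x, Y x) := rfl
  have hmeas : Measurable (infoDeviation μ X Y) :=
    hG ▸ (measurable_of_countable G).comp (hX.prodMk hY)
  rw [memLp_two_iff_integrable_sq hmeas.aestronglyMeasurable]
  refine ⟨(hmeas.pow_const 2).aestronglyMeasurable, ?_⟩
  rw [hasFiniteIntegral_iff_ofReal (.of_forall fun x => sq_nonneg _)]
  exact (lintegral_infoDeviation_sq_le hX hY).trans_lt (by finiteness)

theorem integral_infoDeviation_sq_le (hX : Measurable X) (hY : Measurable Y) :
    ∫ x, infoDeviation μ X Y x ^ 2 ∂μ ≤ μ.real univ * (Fintype.card κ * (4 / Real.log 2 ^ 2)) := by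
  rw [integral_eq_lintegral_of_nonneg_ae (.of_forall fun x => sq_nonneg _)
    (memLp_infoDeviation hX hY).integrable_sq.aestronglyMeasurable]
  refine (ENNReal.toReal_mono (by finiteness) (lintegral_infoDeviation_sq_le hX hY)).trans_eq ?_
  rw [ENNReal.toReal_mul, ENNReal.toReal_ofReal (by positivity), Measure.real]

theorem integral_mul_infoDeviation_eq_zero (hX : Measurable X) (hY : Measurable Y) {c : Ω → ℝ}
    (hc : c.FactorsThrough X) (hint : Integrable (fun x => c x * infoDeviation μ X Y x) μ) :
    ∫ x, c x * infoDeviation μ X Y x ∂μ = 0 := by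
  obtain ⟨g, rfl⟩ := (Function.factorsThrough_iff c).1 hc
  refine integral_eq_zero_of_forall_cond hX hint fun q => ?_
  have hg : (fun x => (g ∘ X) x) =ᵐ[μ[|X ⁻¹' {q}]] fun _ => g q :=
    ae_cond_of_forall_mem (hX (measurableSet_singleton q)) fun x hx => congrArg g hx
  calc ∫ x, (g ∘ X) x * infoDeviation μ X Y x ∂μ[|X ⁻¹' {q}]
      = ∫ x, g q * (information μ[|X ⁻¹' {q}] Y x - shannonEntropy μ[|X ⁻¹' {q}] Y)
          ∂μ[|X ⁻¹' {q}] := integral_congr_ae (hg.mul (infoDeviation_ae_eq_cond hX q))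
    _ = 0 := by
        rw [integral_const_mul, integral_information_sub_shannonEntropy hY, mul_zero]

theorem isLagOrthogonal_infoDeviation {X : ℕ → Ω → ι} {Y : ℕ → Ω → κ} {ℓ : ℕ}
    (hX : ∀ i, Measurable (X i)) (hY : ∀ i, Measurable (Y i))
    (hXY : ∀ i j, i + ℓ ≤ j → (fun x => (X i x, Y i x)).FactorsThrough (X j)) :
    IsLagOrthogonal μ (fun i => infoDeviation μ (X i) (Y i)) ℓ
      (μ.real univ * (Fintype.card κ * (4 / Real.log 2 ^ 2))) where
  memLp i := memLp_infoDeviation (hX i) (hY i)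
  integral_sq_le i := integral_infoDeviation_sq_le (hX i) (hY i)
  integral_mul_eq_zero i j hij := by
    refine integral_mul_infoDeviation_eq_zero (hX j) (hY j) (fun x y hxy => ?_)
      ((memLp_infoDeviation (hX i) (hY i)).integrable_mul (memLp_infoDeviation (hX j) (hY j)))
    obtain ⟨hXxy, hYxy⟩ := Prod.mk.inj (hXY i j hij hxy)
    simp only [infoDeviation, information, hXxy, hYxy]

theorem ae_tendsto_sum_infoDeviation_div {X : ℕ → Ω → ι} {Y : ℕ → Ω → κ} {ℓ : ℕ}
    (hX : ∀ i, Measurable (X i)) (hY : ∀ i, Measurable (Y i))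
    (hXY : ∀ i j, i + ℓ ≤ j → (fun x => (X i x, Y i x)).FactorsThrough (X j)) :
    ∀ᵐ x ∂μ, Tendsto
      (fun n : ℕ => (∑ i ∈ Finset.range n, infoDeviation μ (X i) (Y i) x) / n) atTop (𝓝 0) :=
  (isLagOrthogonal_infoDeviation hX hY hXY).ae_tendsto_sum_div fun _ => neg_card_le_infoDeviation

end Conditioning

section DyadicCubes

variable {d : ℕ}

theorem mem_dyadicCell_iff {n : ℕ} {j : Fin d → ℤ} {y : EuclideanSpace ℝ (Fin d)} :
    y ∈ dyadicCell d n j ↔ dyadicIdx d n y = j := by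
  have h2 : (0 : ℝ) < 2 ^ n := by positivity
  simp only [dyadicCell, mem_ofPred_eq, dyadicIdx, funext_iff, Int.floor_eq_iff,
    div_le_iff₀' h2, lt_div_iff₀' h2]

theorem dyadicIdx_preimage_singleton (n : ℕ) (j : Fin d → ℤ) :
    dyadicIdx d n ⁻¹' {j} = dyadicCell d n j :=
  Set.ext fun _ => mem_dyadicCell_iff.symm

theorem dyadicIdx_preimage_singleton_self (n : ℕ) (x : EuclideanSpace ℝ (Fin d)) :
    dyadicIdx d n ⁻¹' {dyadicIdx d n x} = Qcube d n x :=
  dyadicIdx_preimage_singleton n _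

theorem measurable_dyadicIdx (d n : ℕ) : Measurable (dyadicIdx d n) := by
  unfold dyadicIdx
  fun_prop

theorem dyadicIdx_apply_eq_ediv (n m : ℕ) (x : EuclideanSpace ℝ (Fin d)) (i : Fin d) :
    dyadicIdx d n x i = dyadicIdx d (n + m) x i / ((2 ^ m : ℕ) : ℤ) := by
  rw [dyadicIdx, dyadicIdx, ← Int.floor_div_natCast]
  congr 1
  push_cast
  rw [pow_add]
  field_simp

theorem dyadicIdx_factorsThrough {m n : ℕ} (h : m ≤ n) :
    (dyadicIdx d m).FactorsThrough (dyadicIdx d n) := by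
  obtain ⟨k, rfl⟩ := Nat.exists_eq_add_of_le h
  intro x y hxy
  ext i
  rw [dyadicIdx_apply_eq_ediv m k, dyadicIdx_apply_eq_ediv m k, hxy]

theorem Qcube_anti (x : EuclideanSpace ℝ (Fin d)) : Antitone fun n => Qcube d n x :=
  fun _ _ h _ hy => mem_dyadicCell_iff.2 (dyadicIdx_factorsThrough h (mem_dyadicCell_iff.1 hy))

/-- Splits the index of a dyadic cube into the index of its ancestor `m` levels above and the
position of the cube inside that ancestor. -/
def splitIndex (d m : ℕ) : (Fin d → ℤ) ≃ (Fin d → ℤ) × (Fin d → Fin (2 ^ m)) :=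
  (Equiv.piCongrRight fun _ => Int.divModEquiv (2 ^ m)).trans (Equiv.arrowProdEquivProdArrow _ _ _)

theorem splitIndex_symm_apply (m : ℕ) (q : Fin d → ℤ) (k : Fin d → Fin (2 ^ m)) :
    (splitIndex d m).symm (q, k) = fun i => 2 ^ m * q i + ((k i : ℕ) : ℤ) := by
  ext i
  change q i * ((2 ^ m : ℕ) : ℤ) + ((k i : ℕ) : ℤ) = _
  push_cast
  ring

/-- The position of the level-`(n + m)` dyadic cube of `x` inside its level-`n` dyadic cube. -/
noncomputable def relativeIdx (d m n : ℕ) (x : EuclideanSpace ℝ (Fin d)) : Fin d → Fin (2 ^ m) :=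
  (splitIndex d m (dyadicIdx d (n + m) x)).2

theorem splitIndex_dyadicIdx (m n : ℕ) (x : EuclideanSpace ℝ (Fin d)) :
    splitIndex d m (dyadicIdx d (n + m) x) = (dyadicIdx d n x, relativeIdx d m n x) :=
  Prod.ext (funext fun i => (dyadicIdx_apply_eq_ediv n m x i).symm) rfl

theorem measurable_relativeIdx (d m n : ℕ) : Measurable (relativeIdx d m n) :=
  (measurable_of_countable fun j => (splitIndex d m j).2).comp (measurable_dyadicIdx d (n + m))

theorem dyadicIdx_preimage_inter_relativeIdx_preimage (m n : ℕ) (q : Fin d → ℤ)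
    (k : Fin d → Fin (2 ^ m)) :
    dyadicIdx d n ⁻¹' {q} ∩ relativeIdx d m n ⁻¹' {k} =
      dyadicCell d (n + m) fun i => 2 ^ m * q i + ((k i : ℕ) : ℤ) := by
  ext y
  rw [mem_dyadicCell_iff, ← splitIndex_symm_apply, Equiv.eq_symm_apply, splitIndex_dyadicIdx,
    Prod.mk_inj]
  rfl

section Entropy

variable (μ : Measure (EuclideanSpace ℝ (Fin d)))

theorem condEntropy'_eq_shannonEntropy (ℓ n : ℕ) (x : EuclideanSpace ℝ (Fin d)) :
    condEntropy' d ℓ n μ x =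
      shannonEntropy μ[|dyadicIdx d n ⁻¹' {dyadicIdx d n x}] (relativeIdx d ℓ n) := by
  simp only [condEntropy', shannonEntropy,
    measureReal_cond (measurable_dyadicIdx d n (measurableSet_singleton _)),
    dyadicIdx_preimage_inter_relativeIdx_preimage, div_eq_inv_mul]
  simp only [dyadicIdx_preimage_singleton_self, Measure.real]

theorem condEntropy'_nonneg (ℓ n : ℕ) (x : EuclideanSpace ℝ (Fin d)) : 0 ≤ condEntropy' d ℓ n μ x :=
  condEntropy'_eq_shannonEntropy μ ℓ n x ▸ shannonEntropy_nonneg _ _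

theorem condEntropy'_le (ℓ n : ℕ) (x : EuclideanSpace ℝ (Fin d)) :
    condEntropy' d ℓ n μ x ≤ Fintype.card (Fin d → Fin (2 ^ ℓ)) * (1 / Real.log 2) :=
  condEntropy'_eq_shannonEntropy μ ℓ n x ▸ shannonEntropy_le _ _

variable [IsFiniteMeasure μ]

theorem infoDeviation_dyadicIdx (ℓ n : ℕ) {x : EuclideanSpace ℝ (Fin d)}
    (hx : μ (dyadicIdx d (n + ℓ) ⁻¹' {dyadicIdx d (n + ℓ) x}) ≠ 0) :
    infoDeviation μ (dyadicIdx d n) (relativeIdx d ℓ n) x =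
      information μ (dyadicIdx d (n + ℓ)) x - information μ (dyadicIdx d n) x -
        condEntropy' d ℓ n μ x := by
  have hpair : (fun y => (dyadicIdx d n y, relativeIdx d ℓ n y)) =
      splitIndex d ℓ ∘ dyadicIdx d (n + ℓ) :=
    funext fun y => (splitIndex_dyadicIdx ℓ n y).symm
  rw [infoDeviation, information_cond (measurable_dyadicIdx d n), hpair,
    information_comp_of_injective (splitIndex d ℓ).injective, condEntropy'_eq_shannonEntropy]
  rwa [← splitIndex_dyadicIdx, hpair, Set.preimage_comp, ← Set.image_singleton,
    (splitIndex d ℓ).injective.preimage_image]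

theorem ae_tendsto_sum_information_increment_sub_condEntropy' (ℓ : ℕ) :
    ∀ᵐ x ∂μ, Tendsto (fun n : ℕ => (∑ i ∈ Finset.Icc 1 n,
      (information μ (dyadicIdx d (i + ℓ)) x - information μ (dyadicIdx d i) x -
        condEntropy' d ℓ i μ x)) / (n : ℝ)) atTop (𝓝 0) := by
  have hslln := ae_tendsto_sum_infoDeviation_div (μ := μ) (ℓ := ℓ)
    (fun i => measurable_dyadicIdx d (i + 1)) (fun i => measurable_relativeIdx d ℓ (i + 1))
    fun i j hij x y hxy => by
      simp only [← splitIndex_dyadicIdx]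
      rw [dyadicIdx_factorsThrough (by omega : i + 1 + ℓ ≤ j + 1) hxy]
  filter_upwards [hslln,
    ae_all_iff.2 fun n => ae_measure_preimage_singleton_ne_zero μ (dyadicIdx d n)] with x hx hpos
  simpa only [sum_Icc_one_eq_sum_range, infoDeviation_dyadicIdx μ ℓ _ (hpos _)] using hx

end Entropy


section Comparison

theorem tsum_measure_dyadicCell (μ : Measure (EuclideanSpace ℝ (Fin d))) (n : ℕ) :
    ∑' q, μ (dyadicCell d n q) = μ univ := by
  rw [← tsum_univ fun q => μ (dyadicCell d n q), ← Set.preimage_univ (f := dyadicIdx d n),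
    ← tsum_measure_preimage_singleton Set.countable_univ fun q _ =>
      measurable_dyadicIdx d n (measurableSet_singleton q)]
  simp only [dyadicIdx_preimage_singleton]

theorem ball_subset_iUnion_dyadicCell (n : ℕ) (x : EuclideanSpace ℝ (Fin d)) :
    ball x ((1 / 2) ^ n) ⊆ ⋃ s ∈ Fintype.piFinset fun _ => Finset.Icc (-1) 1,
      dyadicCell d n (dyadicIdx d n x + s) := by
  intro y hy
  have hcoord : ∀ i, |2 ^ n * y i - 2 ^ n * x i| < 1 := fun i => by
    have h := (PiLp.norm_apply_le (y - x) i).trans_lt (mem_ball_iff_norm.1 hy)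
    rw [PiLp.sub_apply, Real.norm_eq_abs, one_div_pow, lt_div_iff₀' (by positivity)] at h
    rwa [← mul_sub, abs_mul, abs_of_pos (by positivity)]
  simp only [Set.mem_iUnion, mem_dyadicCell_iff, exists_prop]
  refine ⟨dyadicIdx d n y - dyadicIdx d n x, ?_, (add_sub_cancel _ _).symm⟩
  simp only [Fintype.mem_piFinset, Finset.mem_Icc, Pi.sub_apply, dyadicIdx]
  intro i
  obtain ⟨hxy, hyx⟩ := abs_lt.1 (hcoord i)
  have h₁ := Int.floor_mono (show 2 ^ n * y i ≤ 2 ^ n * x i + 1 by linarith)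
  have h₂ := Int.floor_mono (show 2 ^ n * x i ≤ 2 ^ n * y i + 1 by linarith)
  rw [Int.floor_add_one] at h₁ h₂
  omega

theorem Qcube_add_subset_ball (n : ℕ) (x : EuclideanSpace ℝ (Fin d)) :
    Qcube d (n + d) x ⊆ ball x ((1 / 2) ^ n) := by
  intro y hy
  have hcoord : ∀ i, dist (y i) (x i) ^ 2 ≤ ((1 / 2) ^ (n + d)) ^ 2 := fun i => by
    have h := Int.abs_sub_lt_one_of_floor_eq_floor (congrFun (mem_dyadicCell_iff.1 hy) i)
    rw [← mul_sub, abs_mul, abs_of_pos (by positivity), ← lt_div_iff₀' (by positivity),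
      ← Real.dist_eq, ← one_div_pow] at h
    gcongr
  have hd : (d : ℝ) < (2 ^ d) ^ 2 := by
    exact_mod_cast Nat.lt_two_pow_self.trans_le (Nat.le_self_pow two_ne_zero _)
  rw [mem_ball, EuclideanSpace.dist_eq, Real.sqrt_lt' (by positivity)]
  calc ∑ i, dist (y i) (x i) ^ 2 ≤ d * ((1 / 2) ^ (n + d)) ^ 2 :=
        (Finset.sum_le_sum fun i _ => hcoord i).trans_eq (by simp)
    _ < (2 ^ d) ^ 2 * ((1 / 2) ^ (n + d)) ^ 2 := by gcongr
    _ = ((1 / 2) ^ n) ^ 2 := by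
        rw [← mul_pow, pow_add, mul_left_comm, ← mul_pow, mul_one_div_cancel two_ne_zero, one_pow,
          mul_one]

variable (μ : Measure (EuclideanSpace ℝ (Fin d))) [IsFiniteMeasure μ]

theorem ae_eventually_measure_Qcube_le (c : ℕ) : ∀ᵐ x ∂μ, ∀ᶠ n : ℕ in atTop,
    μ (Qcube d n x) ≤ ((n : ℝ≥0∞) + 1) ^ 2 * μ (Qcube d (n + c) x) := by
  set w : ℕ → (Fin d → ℤ) → ℝ≥0∞ := fun n r => μ (dyadicCell d n (splitIndex d c r).1)
  have hw : ∀ n, ∑' r, w n r = μ univ * Fintype.card (Fin d → Fin (2 ^ c)) := fun n => by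
    rw [(splitIndex d c).tsum_eq fun p => μ (dyadicCell d n p.1),
      ENNReal.tsum_prod (f := fun q _ => μ (dyadicCell d n q))]
    simp only [tsum_fintype, Finset.sum_const, Finset.card_univ, nsmul_eq_mul']
    rw [ENNReal.tsum_mul_right, tsum_measure_dyadicCell]
  have h := ae_eventually_le_mul_measure_preimage (μ := μ)
    (fun n => measurable_dyadicIdx d (n + c)) (by finiteness) fun n => (hw n).le
  simp only [w, splitIndex_dyadicIdx, dyadicIdx_preimage_singleton_self] at h
  exact h

theorem ae_eventually_measure_ball_le : ∀ᵐ x ∂μ, ∀ᶠ n : ℕ in atTop,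
    μ (ball x ((1 / 2) ^ n)) ≤ ((n : ℝ≥0∞) + 1) ^ 2 * μ (Qcube d n x) := by
  set S : Finset (Fin d → ℤ) := Fintype.piFinset fun _ => Finset.Icc (-1) 1
  set w : ℕ → (Fin d → ℤ) → ℝ≥0∞ := fun n q => ∑ s ∈ S, μ (dyadicCell d n (q + s))
  have hw : ∀ n, ∑' q, w n q = S.card * μ univ := fun n => by
    rw [Summable.tsum_finsetSum fun _ _ => ENNReal.summable, ← nsmul_eq_mul, ← Finset.sum_const]
    refine Finset.sum_congr rfl fun s _ => ?_
    exact ((Equiv.addRight s).tsum_eq fun q => μ (dyadicCell d n q)).trans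
      (tsum_measure_dyadicCell μ n)
  have h := ae_eventually_le_mul_measure_preimage (μ := μ) (measurable_dyadicIdx d)
    (by finiteness) fun n => (hw n).le
  simp only [dyadicIdx_preimage_singleton_self] at h
  filter_upwards [h] with x hx
  filter_upwards [hx] with n hn
  exact (measure_mono (ball_subset_iUnion_dyadicCell n x)).trans
    ((measure_biUnion_finset_le _ _).trans hn)

end Comparison

end DyadicCubes

section DyadicScale

/-- The number `⌊-log₂ r⌋₊` of the dyadic scale of `r`: the `n` for which
`2⁻⁽ⁿ⁺¹⁾ < r ≤ 2⁻ⁿ` when `0 < r ≤ 1`. -/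
noncomputable def dyadicScale (r : ℝ) : ℕ := ⌊-Real.logb 2 r⌋₊

theorem dyadicScale_one_half_pow (n : ℕ) : dyadicScale ((1 / 2) ^ n) = n := by
  simp [dyadicScale, Real.logb_pow]

theorem tendsto_dyadicScale : Tendsto dyadicScale (𝓝[>] 0) atTop :=
  tendsto_nat_floor_atTop.comp
    (tendsto_neg_atBot_atTop.comp (Real.tendsto_logb_nhdsGT_zero one_lt_two))

theorem map_dyadicScale_nhdsGT_zero : map dyadicScale (𝓝[>] 0) = atTop := by
  refine le_antisymm tendsto_dyadicScale ?_
  have hpow : Tendsto (fun n : ℕ => (1 / 2 : ℝ) ^ n) atTop (𝓝[>] 0) :=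
    tendsto_pow_atTop_nhdsWithin_zero_of_lt_one one_half_pos one_half_lt_one
  calc atTop = map dyadicScale (map (fun n : ℕ => (1 / 2 : ℝ) ^ n) atTop) := by
        rw [map_map, show dyadicScale ∘ (fun n : ℕ => (1 / 2 : ℝ) ^ n) = id from
          funext dyadicScale_one_half_pow, map_id]
    _ ≤ map dyadicScale (𝓝[>] 0) := map_mono hpow

theorem le_one_half_pow_dyadicScale {r : ℝ} (hr₀ : 0 < r) (hr₁ : r ≤ 1) :
    r ≤ (1 / 2) ^ dyadicScale r := by
  have h := Nat.floor_le (neg_nonneg.2 (Real.logb_nonpos one_lt_two hr₀.le hr₁))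
  rw [le_neg, Real.logb_le_iff_le_rpow one_lt_two hr₀] at h
  rwa [one_div_pow, one_div, ← Real.rpow_natCast, ← Real.rpow_neg zero_le_two]

theorem one_half_pow_dyadicScale_add_one_lt {r : ℝ} (hr : 0 < r) :
    (1 / 2) ^ (dyadicScale r + 1) < r := by
  have h := Nat.lt_floor_add_one (-Real.logb 2 r)
  rw [neg_lt, Real.lt_logb_iff_rpow_lt one_lt_two hr] at h
  rw [one_div_pow, one_div, ← Real.rpow_natCast, ← Real.rpow_neg zero_le_two]
  exact_mod_cast h

theorem isLittleO_neg_logb_sub_dyadicScale :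
    (fun r => -Real.logb 2 r - dyadicScale r) =o[𝓝[>] 0] fun r => (dyadicScale r : ℝ) := by
  have hbdd : (fun r => -Real.logb 2 r - dyadicScale r) =O[𝓝[>] 0] fun _ => (1 : ℝ) := by
    refine .of_bound' ?_
    filter_upwards [Ioc_mem_nhdsGT one_pos] with r hr
    have h₁ := Nat.floor_le (neg_nonneg.2 (Real.logb_nonpos one_lt_two hr.1.le hr.2))
    have h₂ := Nat.lt_floor_add_one (-Real.logb 2 r)
    rw [norm_one, Real.norm_eq_abs, abs_le, dyadicScale]
    constructor <;> linarith
  exact hbdd.trans_isLittleO (isLittleO_const_left.2 (.inr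
    (tendsto_norm_atTop_atTop.comp (tendsto_natCast_atTop_atTop.comp tendsto_dyadicScale))))

end DyadicScale

section LocalDimension

theorem neg_logb_measureReal_le {Ω : Type*} [MeasurableSpace Ω] {μ : Measure Ω}
    [IsFiniteMeasure μ] {s t : Set Ω} {n : ℕ} (hs : μ s ≠ 0)
    (hst : μ s ≤ ((n : ℝ≥0∞) + 1) ^ 2 * μ t) :
    -Real.logb 2 (μ.real t) ≤ -Real.logb 2 (μ.real s) + 2 * Real.logb 2 (n + 1) := by
  have hs' : 0 < μ.real s := ENNReal.toReal_pos hs (measure_ne_top _ _)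
  have h : μ.real s ≤ ((n : ℝ) + 1) ^ 2 * μ.real t := by
    have := ENNReal.toReal_mono (by finiteness) hst
    rwa [ENNReal.toReal_mul, ENNReal.toReal_pow, ENNReal.toReal_add (by finiteness) (by finiteness),
      ENNReal.toReal_natCast, ENNReal.toReal_one] at this
  have ht : 0 < μ.real t := pos_of_mul_pos_right (hs'.trans_le h) (by positivity)
  have hlog := Real.logb_le_logb_of_le one_lt_two hs' h
  rw [Real.logb_mul (by positivity) ht.ne', Real.logb_pow] at hlog
  push_cast at hlog
  linarith

theorem neg_logb_measureReal_anti {Ω : Type*} [MeasurableSpace Ω] {μ : Measure Ω}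
    [IsFiniteMeasure μ] {s t : Set Ω} (hs : μ s ≠ 0) (hst : s ⊆ t) :
    -Real.logb 2 (μ.real t) ≤ -Real.logb 2 (μ.real s) :=
  neg_le_neg (Real.logb_le_logb_of_le one_lt_two (ENNReal.toReal_pos hs (measure_ne_top _ _))
    (measureReal_mono hst))

variable {d ℓ : ℕ} {μ : Measure (EuclideanSpace ℝ (Fin d))} {x : EuclideanSpace ℝ (Fin d)}

theorem information_dyadicIdx (n : ℕ) :
    information μ (dyadicIdx d n) x = -Real.logb 2 (μ.real (Qcube d n x)) := by
  rw [information, dyadicIdx_preimage_singleton_self]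

theorem isBigO_entropyAverage (hℓ : 0 < ℓ) :
    (fun n : ℕ => 1 / ((ℓ : ℝ) * n) * ∑ i ∈ Finset.Icc 1 n, condEntropy' d ℓ i μ x)
      =O[atTop] fun _ => (1 : ℝ) := by
  set C : ℝ := Fintype.card (Fin d → Fin (2 ^ ℓ)) * (1 / Real.log 2)
  refine .of_bound C ?_
  filter_upwards [eventually_gt_atTop 0] with n hn
  have hsum₀ : 0 ≤ ∑ i ∈ Finset.Icc 1 n, condEntropy' d ℓ i μ x :=
    Finset.sum_nonneg fun i _ => condEntropy'_nonneg μ ℓ i x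
  have hsum : ∑ i ∈ Finset.Icc 1 n, condEntropy' d ℓ i μ x ≤ n * C :=
    (Finset.sum_le_sum fun i _ => condEntropy'_le μ ℓ i x).trans_eq (by simp [C])
  have hℓ₁ : (1 : ℝ) ≤ ℓ := by exact_mod_cast hℓ
  have hC : 0 ≤ C := by positivity
  rw [norm_one, mul_one, Real.norm_of_nonneg (by positivity), one_div_mul_eq_div,
    div_le_iff₀ (by positivity)]
  nlinarith [mul_nonneg hC n.cast_nonneg]

theorem isBigO_information_of_tendsto_entropyAverage_sub (hℓ : 0 < ℓ)
    (h : Tendsto (fun n : ℕ => 1 / ((ℓ : ℝ) * n) * ∑ i ∈ Finset.Icc 1 n, condEntropy' d ℓ i μ x -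
      information μ (dyadicIdx d n) x / n) atTop (𝓝 0)) :
    (fun n => information μ (dyadicIdx d n) x) =O[atTop] fun n : ℕ => (n : ℝ) := by
  have hdiv := (isBigO_entropyAverage hℓ (μ := μ) (x := x)).sub (h.isBigO_one ℝ)
  refine (hdiv.mul (isBigO_refl (fun n : ℕ => (n : ℝ)) atTop)).congr' ?_ (by simp)
  filter_upwards [eventually_gt_atTop 0] with n hn
  field_simp
  ring

variable [IsFiniteMeasure μ]

theorem isLittleO_information_dyadicIdx_add_sub (hpos : ∀ n, μ (Qcube d n x) ≠ 0) {c : ℕ}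
    (hQ : ∀ᶠ n : ℕ in atTop, μ (Qcube d n x) ≤ ((n : ℝ≥0∞) + 1) ^ 2 * μ (Qcube d (n + c) x)) :
    (fun n => information μ (dyadicIdx d (n + c)) x - information μ (dyadicIdx d n) x)
      =o[atTop] fun n : ℕ => (n : ℝ) := by
  refine IsBigO.trans_isLittleO (.of_bound' ?_)
    ((isLittleO_logb_natCast_add_one 2).const_mul_left 2)
  filter_upwards [hQ] with n hn
  have h₀ := neg_logb_measureReal_anti (hpos (n + c)) (Qcube_anti x (n.le_add_right c))
  have h₁ := neg_logb_measureReal_le (hpos n) hn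
  rw [information_dyadicIdx, information_dyadicIdx]
  exact abs_le_abs_of_nonneg (by linarith) (by linarith)

theorem isLittleO_neg_logb_measureReal_ball_sub_information (hpos : ∀ n, μ (Qcube d n x) ≠ 0)
    (hQ : ∀ᶠ n : ℕ in atTop,
      μ (Qcube d n x) ≤ ((n : ℝ≥0∞) + 1) ^ 2 * μ (Qcube d (n + (1 + d)) x))
    (hball : ∀ᶠ n : ℕ in atTop,
      μ (ball x ((1 / 2) ^ n)) ≤ ((n : ℝ≥0∞) + 1) ^ 2 * μ (Qcube d n x)) :
    (fun r => -Real.logb 2 (μ.real (ball x r)) - information μ (dyadicIdx d (dyadicScale r)) x)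
      =o[𝓝[>] 0] fun r => (dyadicScale r : ℝ) := by
  set g : ℕ → ℝ := fun n => information μ (dyadicIdx d (n + (1 + d))) x -
    information μ (dyadicIdx d n) x + 2 * Real.logb 2 (n + 1)
  have hg : g =o[atTop] fun n : ℕ => (n : ℝ) :=
    (isLittleO_information_dyadicIdx_add_sub hpos hQ).add
      ((isLittleO_logb_natCast_add_one 2).const_mul_left 2)
  have hbound : (fun r => -Real.logb 2 (μ.real (ball x r)) -
      information μ (dyadicIdx d (dyadicScale r)) x) =O[𝓝[>] 0] (g ∘ dyadicScale) := by
    refine .of_bound' ?_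
    filter_upwards [Ioc_mem_nhdsGT one_pos, tendsto_dyadicScale.eventually hball] with r hr hrball
    set N := dyadicScale r
    have hsub : Qcube d (N + (1 + d)) x ⊆ ball x r := by
      rw [← add_assoc]
      exact (Qcube_add_subset_ball (N + 1) x).trans
        (ball_subset_ball (one_half_pow_dyadicScale_add_one_lt hr.1).le)
    have hball₀ : μ (ball x r) ≠ 0 := fun h => hpos _ (measure_mono_null hsub h)
    have hle := neg_logb_measureReal_anti (hpos _) hsub
    have hge := neg_logb_measureReal_le hball₀ ((measure_mono
      (ball_subset_ball (le_one_half_pow_dyadicScale hr.1 hr.2))).trans hrball)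
    have hmono := neg_logb_measureReal_anti (hpos _) (Qcube_anti x (N.le_add_right (1 + d)))
    have hlog : 0 ≤ Real.logb 2 ((N : ℝ) + 1) := Real.logb_nonneg one_lt_two (by simp)
    simp only [g, information_dyadicIdx, Function.comp_apply, Real.norm_eq_abs]
    refine (abs_le.2 ⟨?_, ?_⟩).trans (le_abs_self _) <;> linarith
  exact hbound.trans_isLittleO (hg.comp_tendsto tendsto_dyadicScale)

theorem ae_tendsto_log_measureReal_ball_div_log_sub_entropyAverage (hℓ : 0 < ℓ) :
    ∀ᵐ x ∂μ, Tendsto (fun r => Real.log (μ.real (ball x r)) / Real.log r -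
      1 / ((ℓ : ℝ) * dyadicScale r) *
        ∑ i ∈ Finset.Icc 1 (dyadicScale r), condEntropy' d ℓ i μ x) (𝓝[>] 0) (𝓝 0) := by
  filter_upwards [ae_all_iff.2 fun n => ae_measure_preimage_singleton_ne_zero μ (dyadicIdx d n),
    ae_all_iff.2 (ae_eventually_measure_Qcube_le μ), ae_eventually_measure_ball_le μ,
    ae_tendsto_sum_information_increment_sub_condEntropy' μ ℓ] with x hpos hQ hball hslln
  simp only [dyadicIdx_preimage_singleton_self] at hpos
  have havg := tendsto_average_sub_div (a := fun n => information μ (dyadicIdx d n) x) hℓ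
    (fun c => isLittleO_information_dyadicIdx_add_sub hpos (hQ c)) hslln
  have hinfo := (isBigO_information_of_tendsto_entropyAverage_sub hℓ havg).comp_tendsto
    tendsto_dyadicScale
  have hdiv := tendsto_div_sub_div_of_isLittleO
    (isLittleO_neg_logb_measureReal_ball_sub_information hpos (hQ _) hball)
    isLittleO_neg_logb_sub_dyadicScale hinfo
  have hlim := hdiv.sub (havg.comp tendsto_dyadicScale)
  rw [sub_zero] at hlim
  refine hlim.congr fun r => ?_
  have hlog : Real.log 2 ≠ 0 := (Real.log_pos one_lt_two).ne'
  simp only [Function.comp_apply, Real.logb, neg_div_neg_eq, div_div_div_cancel_right₀ hlog]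
  ring

end LocalDimension

theorem stmt4_general (d ℓ : ℕ) (hℓ : 0 < ℓ) (μ : Measure (EuclideanSpace ℝ (Fin d)))
    [IsFiniteMeasure μ] :
    ∀ᵐ x ∂μ,
      (upperLocalDim μ x = Filter.limsup (fun n : ℕ =>
          (((1 / ((ℓ : ℝ) * n)) * ∑ i ∈ Finset.Icc 1 n, condEntropy' d ℓ i μ x : ℝ) : EReal))
        atTop) ∧
      (lowerLocalDim μ x = Filter.liminf (fun n : ℕ =>
          (((1 / ((ℓ : ℝ) * n)) * ∑ i ∈ Finset.Icc 1 n, condEntropy' d ℓ i μ x : ℝ) : EReal))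
        atTop) := by
  filter_upwards [ae_tendsto_log_measureReal_ball_div_log_sub_entropyAverage hℓ] with x hx
  rw [← map_dyadicScale_nhdsGT_zero]
  exact ⟨limsup_coe_eq_of_tendsto_sub hx, liminf_coe_eq_of_tendsto_sub hx⟩

/-- For a Borel probability measure `μ` on `[0,1)^d` giving zero mass to
the boundaries of all dyadic cubes and `ℓ ∈ ℕ`, for `μ`-a.e. `x` the upper (resp. lower)
local dimension of `μ` at `x` equals the `limsup` (resp. `liminf`) of the local entropy
averages `(1/(ℓn))·Σ_{i=1}^n H(μ_ℓ^{Q_i(x)})`. -/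
theorem stmt4 (d ℓ : ℕ) (hd : 0 < d) (hℓ : 0 < ℓ)
    (μ : Measure (EuclideanSpace ℝ (Fin d))) [IsProbabilityMeasure μ]
    (hsupp : μ (unitCube d) = 1)
    (hbd : ∀ Q, IsDyadicCube d Q → μ (frontier Q) = 0) :
    ∀ᵐ x ∂μ,
      (upperLocalDim μ x = Filter.limsup (fun n : ℕ =>
          (((1 / ((ℓ : ℝ) * n)) * ∑ i ∈ Finset.Icc 1 n, condEntropy' d ℓ i μ x : ℝ) : EReal))
        atTop) ∧
      (lowerLocalDim μ x = Filter.liminf (fun n : ℕ =>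
          (((1 / ((ℓ : ℝ) * n)) * ∑ i ∈ Finset.Icc 1 n, condEntropy' d ℓ i μ x : ℝ) : EReal))
        atTop) :=
  stmt4_general d ℓ hℓ μ
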